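/- Let S be a finite nonempty set, P : S × S → [0,1] normal (sup_{t ∈ S} P(s,t) = 1 for every s), a, b : S → [0,1], and u ∈ [0,1]. Define PoU(s) := sup_{j ∈ ℕ} [ sup over all finite sequences t₀ = s, t₁, …, t_j in S of min( min_{0 ≤ k < j} min( a(t_k), P(t_k, t_{k+1}) ), b(t_j) ) ]. Then PoU(s) ≥ u if and only if there exist j ∈ ℕ and a finite sequence t₀ = s, t₁, …, t_j in S such that a(t_k) ≥ u and P(t_k, t_{k+1}) ≥ u for all 0 ≤ k < j, and b(t_j) ≥ u. -/

import Mathlib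

/-!
The backward direction is `le_iSup`. For the forward direction the supremum defining `PoUntil` has
to be attained, although it ranges over infinitely many sequences. It is: since `S` is finite, the
value of every sequence lies in the finite set consisting of `1` and the values of `a`, `b` and `P`
(`pathValue_mem`), and a nonempty finite subset of a linear order contains its supremum.
-/

/-- `[0,1]` as a complete lattice. -/
instance : Fact ((0:ℝ) ≤ 1) := ⟨zero_le_one⟩

/-- The value of a run `σ`: `inf_{i ≥ 0} P(σ i, σ (i+1))`. -/
noncomputable def valP {S : Type*} (P : S → S → unitInterval) (σ : ℕ → S) : unitInterval :=
  ⨅ i : ℕ, P (σ i) (σ (i + 1))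

/-- `r_P(s)`: the supremum of the values of all runs starting at `s`. -/
noncomputable def rP {S : Type*} (P : S → S → unitInterval) (s : S) : unitInterval :=
  ⨆ σ : {σ : ℕ → S // σ 0 = s}, valP P σ.1

/-- `PoU(s) = Po(s ⊨ Φ′ ⊔ Φ″)` for a normal `P`: the sup over `j ∈ ℕ` and finite
sequences `t₀ = s, …, t_j` of `min( min_{0≤k<j} min(a(t_k), P(t_k, t_{k+1})), b(t_j) )`. -/
noncomputable def PoUntil {S : Type*} (P : S → S → unitInterval)
    (a b : S → unitInterval) (s : S) : unitInterval :=
  ⨆ j : ℕ, ⨆ t : {t : Fin (j + 1) → S // t 0 = s},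
    min (⨅ k : Fin j, min (a (t.1 k.castSucc)) (P (t.1 k.castSucc) (t.1 k.succ)))
      (b (t.1 (Fin.last j)))

/-- The value `min( min_{k<j} min(a(t_k), P(t_k, t_{k+1})), b(t_j) )` of a finite sequence `t`. -/
noncomputable def pathValue {S : Type*} (P : S → S → unitInterval) (a b : S → unitInterval)
    {j : ℕ} (t : Fin (j + 1) → S) : unitInterval :=
  min (⨅ k : Fin j, min (a (t k.castSucc)) (P (t k.castSucc) (t k.succ))) (b (t (Fin.last j)))

theorem le_pathValue_iff {S : Type*} (P : S → S → unitInterval) (a b : S → unitInterval)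
    {j : ℕ} (t : Fin (j + 1) → S) (u : unitInterval) :
    u ≤ pathValue P a b t ↔
      (∀ k : Fin j, u ≤ a (t k.castSucc) ∧ u ≤ P (t k.castSucc) (t k.succ)) ∧
        u ≤ b (t (Fin.last j)) := by
  unfold pathValue
  rw [le_min_iff, le_iInf_iff]
  simp only [le_min_iff]

/-- Path values never leave the set of values of `a`, `b`, `P`, together with `1`, the value of the
empty infimum that occurs for `j = 0`. -/
theorem pathValue_mem {S : Type*} (P : S → S → unitInterval) (a b : S → unitInterval)
    {j : ℕ} (t : Fin (j + 1) → S) :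
    pathValue P a b t ∈
      {⊤} ∪ Set.range a ∪ Set.range b ∪ Set.range (fun p : S × S => P p.1 p.2) := by
  unfold pathValue
  rcases min_choice (⨅ k : Fin j, min (a (t k.castSucc)) (P (t k.castSucc) (t k.succ)))
    (b (t (Fin.last j))) with h | h
  · rw [h]
    rcases isEmpty_or_nonempty (Fin j) with hj | hj
    · rw [iInf_of_empty]
      simp
    · obtain ⟨k, hk⟩ := exists_eq_ciInf_of_finite
        (f := fun k : Fin j => min (a (t k.castSucc)) (P (t k.castSucc) (t k.succ)))
      rw [← hk]
      rcases min_choice (a (t k.castSucc)) (P (t k.castSucc) (t k.succ)) with h' | h'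
      · exact Or.inl (Or.inl (Or.inr ⟨_, h'.symm⟩))
      · exact Or.inr ⟨(t k.castSucc, t k.succ), h'.symm⟩
  · rw [h]
    exact Or.inl (Or.inr ⟨_, rfl⟩)

/-- For normal `P`: `PoU(s) ≥ u` iff some finite sequence `t₀ = s, …, t_j` satisfies
`a(t_k) ≥ u` and `P(t_k, t_{k+1}) ≥ u` for all `k < j`, and `b(t_j) ≥ u`. -/
theorem until_threshold_ge {S : Type*} [Fintype S] [Nonempty S]
    (P : S → S → unitInterval) (hP : ∀ s : S, (⨆ t : S, P s t) = 1)
    (a b : S → unitInterval) (u : unitInterval) (s : S) :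
    u ≤ PoUntil P a b s ↔
      ∃ (j : ℕ) (t : Fin (j + 1) → S), t 0 = s ∧
        (∀ k : Fin j, u ≤ a (t k.castSucc) ∧ u ≤ P (t k.castSucc) (t k.succ)) ∧
        u ≤ b (t (Fin.last j)) := by
  have hsup : PoUntil P a b s =
      ⨆ x : (Σ j : ℕ, {t : Fin (j + 1) → S // t 0 = s}), pathValue P a b x.2.1 := by
    rw [iSup_sigma]
    rfl
  rw [hsup]
  constructor
  · intro hu
    have hfin : (Set.range fun x : (Σ j : ℕ, {t : Fin (j + 1) → S // t 0 = s}) =>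
        pathValue P a b x.2.1).Finite := by
      refine Set.Finite.subset ((((Set.finite_singleton (⊤ : unitInterval)).union
        (Set.finite_range a)).union (Set.finite_range b)).union
        (Set.finite_range fun p : S × S => P p.1 p.2)) ?_
      rintro _ ⟨x, rfl⟩
      exact pathValue_mem P a b x.2.1
    have hne : (Set.range fun x : (Σ j : ℕ, {t : Fin (j + 1) → S // t 0 = s}) =>
        pathValue P a b x.2.1).Nonempty :=
      ⟨_, ⟨0, fun _ => s, rfl⟩, rfl⟩
    obtain ⟨⟨j, t, ht⟩, hx⟩ := hne.csSup_mem hfin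
    exact ⟨j, t, ht, (le_pathValue_iff P a b t u).1 (hu.trans hx.ge)⟩
  · rintro ⟨j, t, ht, h⟩
    exact ((le_pathValue_iff P a b t u).2 h).trans
      (le_iSup (fun x : (Σ j : ℕ, {t : Fin (j + 1) → S // t 0 = s}) =>
        pathValue P a b x.2.1) ⟨j, t, ht⟩)
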